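/- Suppose U_K≠∅ and one of the hypotheses (b), (d1b), (K) is satisfied. Then there exists an open neighbourhood N_K of X_{fK} in X_f such that the projection R^K defines a diffeomorphism R_K from N_K onto the open subset R^K N_K of X_0, and N_K is a graph over X_0 (with respect to the closed complement Q_K of X_0). -/

import Mathlib

open Set

noncomputable section

/-- The compact interval `[-r,0]`. -/
abbrev Icc0 (r : ℝ) : Set ℝ := Set.Icc (-r) 0

/-- Extension of a continuous map on `[-r,0]` to `ℝ`, by the value `0` outside. -/
def extFun {r : ℝ} {E : Type*} [TopologicalSpace E] [Zero E] (φ : C(Icc0 r, E)) : ℝ → E :=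
  fun t => if h : t ∈ Icc0 r then φ ⟨t, h⟩ else 0

section extlemmas

variable {r : ℝ} {E : Type*} [NormedAddCommGroup E] [NormedSpace ℝ E]

lemma extFun_add (φ ψ : C(Icc0 r, E)) : extFun (φ + ψ) = extFun φ + extFun ψ := by
  funext t; by_cases h : t ∈ Icc0 r <;> simp [extFun, h]

lemma extFun_zero : extFun (0 : C(Icc0 r, E)) = 0 := by
  funext t; by_cases h : t ∈ Icc0 r <;> simp [extFun, h]

lemma extFun_smul (c : ℝ) (φ : C(Icc0 r, E)) : extFun (c • φ) = c • extFun φ := by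
  funext t; by_cases h : t ∈ Icc0 r <;> simp [extFun, h]

end extlemmas

/-- The space `C¹([-r,0],E)`, realized as the closed subspace of pairs `(φ, φ')` in
`C([-r,0],E) × C([-r,0],E)` such that `φ` is differentiable on `[-r,0]` with derivative `φ'`. -/
def C1sub (r : ℝ) (E : Type*) [NormedAddCommGroup E] [NormedSpace ℝ E] :
    Submodule ℝ (C(Icc0 r, E) × C(Icc0 r, E)) where
  carrier := {p | ∀ t ∈ Icc0 r, HasDerivWithinAt (extFun p.1) (extFun p.2 t) (Icc0 r) t}
  add_mem' := by
    intro p q hp hq t ht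
    have h := (hp t ht).add (hq t ht)
    have e1 : extFun (p + q).1 = fun s => extFun p.1 s + extFun q.1 s := by
      simp [Prod.fst_add, extFun_add]; rfl
    have e2 : extFun (p + q).2 t = extFun p.2 t + extFun q.2 t := by
      simp [Prod.snd_add, extFun_add]
    rw [e1, e2]; exact h
  zero_mem' := by
    intro t ht
    have e1 : extFun (0 : C(Icc0 r, E) × C(Icc0 r, E)).1 = fun _ : ℝ => (0 : E) := by
      simp [extFun_zero]; rfl
    have e2 : extFun (0 : C(Icc0 r, E) × C(Icc0 r, E)).2 t = 0 := by
      simp [extFun_zero]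
    rw [e1, e2]; exact hasDerivWithinAt_const _ _ _
  smul_mem' := by
    intro c p hp t ht
    have h := (hp t ht).const_smul c
    have e1 : extFun (c • p).1 = fun s => c • extFun p.1 s := by
      simp [Prod.smul_fst, extFun_smul]; rfl
    have e2 : extFun (c • p).2 t = c • extFun p.2 t := by
      simp [Prod.smul_snd, extFun_smul]
    rw [e1, e2]; exact h

/-- The Banach space `C¹([-r,0],E)`. -/
abbrev C1 (r : ℝ) (E : Type*) [NormedAddCommGroup E] [NormedSpace ℝ E] := ↥(C1sub r E)

section C1ops

variable {r : ℝ} {E : Type*} [NormedAddCommGroup E] [NormedSpace ℝ E]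

/-- Evaluation `φ(t)` of `φ ∈ C¹([-r,0],E)` (extended by `0` outside `[-r,0]`). -/
def evC (φ : C1 r E) (t : ℝ) : E := extFun φ.1.1 t

/-- Evaluation `φ'(t)` of the derivative of `φ ∈ C¹([-r,0],E)`. -/
def dvC (φ : C1 r E) (t : ℝ) : E := extFun φ.1.2 t

end C1ops

/-- The continuous linear map `ℝ → (Fin n → ℝ)` sending `x` to the vector `x·e_ν`. -/
def sCLM (n : ℕ) (ν : Fin n) : ℝ →L[ℝ] (Fin n → ℝ) :=
  ContinuousLinearMap.pi (fun j => if j = ν then ContinuousLinearMap.id ℝ ℝ else 0)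

/-- `ψ · e_ν` for a continuous map `ψ`. -/
def CMsingle {r : ℝ} {n : ℕ} (ν : Fin n) (φ : C(Icc0 r, ℝ)) : C(Icc0 r, Fin n → ℝ) :=
  ⟨fun t => sCLM n ν (φ t), (sCLM n ν).continuous.comp φ.continuous⟩

lemma extFun_CMsingle {r : ℝ} {n : ℕ} (ν : Fin n) (φ : C(Icc0 r, ℝ)) (t : ℝ) :
    extFun (CMsingle ν φ) t = sCLM n ν (extFun φ t) := by
  by_cases h : t ∈ Icc0 r <;> simp [extFun, CMsingle, h]

/-- `ψ · e_ν ∈ C¹([-r,0],ℝⁿ)` for a scalar function `ψ ∈ C¹([-r,0],ℝ)`. -/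
def singleC1 {r : ℝ} {n : ℕ} (ν : Fin n) (φ : C1 r ℝ) : C1 r (Fin n → ℝ) :=
  ⟨(CMsingle ν φ.1.1, CMsingle ν φ.1.2), by
    intro t ht
    have h := ((sCLM n ν).hasFDerivAt).comp_hasDerivWithinAt t (φ.2 t ht)
    have e1 : extFun (CMsingle ν φ.1.1) = (sCLM n ν) ∘ (extFun φ.1.1) := by
      funext s; exact extFun_CMsingle ν φ.1.1 s
    rw [show (CMsingle ν φ.1.1, CMsingle ν φ.1.2).1 = CMsingle ν φ.1.1 from rfl,
      show (CMsingle ν φ.1.1, CMsingle ν φ.1.2).2 = CMsingle ν φ.1.2 from rfl,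
      e1, extFun_CMsingle]
    exact h⟩

/-- The linear map `ℝⁿ → C¹([-r,0],ℝⁿ)`, `x ↦ Σ_ν x_ν ψ_ν · e_ν` (the map `Y·x`). -/
def Ymap {r : ℝ} {n : ℕ} (ψ : Fin n → C1 r ℝ) : (Fin n → ℝ) →ₗ[ℝ] C1 r (Fin n → ℝ) where
  toFun x := ∑ ν, x ν • singleC1 ν (ψ ν)
  map_add' x y := by simp [add_smul, Finset.sum_add_distrib]
  map_smul' c x := by simp [smul_smul, Finset.smul_sum]

/-- The closed subspace `X₀ = {φ ∈ C¹ : φ'(0) = 0}`. -/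
def X0sub (r : ℝ) (n : ℕ) : Submodule ℝ (C1 r (Fin n → ℝ)) where
  carrier := {φ | dvC φ 0 = 0}
  add_mem' := by
    intro φ ψ hφ hψ
    have : dvC (φ + ψ) 0 = dvC φ 0 + dvC ψ 0 := by
      simp [dvC, extFun_add]
    rw [Set.mem_setOf_eq] at *
    rw [this, hφ, hψ, add_zero]
  zero_mem' := by
    show dvC (0 : C1 r (Fin n → ℝ)) 0 = 0
    simp [dvC, extFun_zero]
  smul_mem' := by
    intro c φ hφ
    have : dvC (c • φ) 0 = c • dvC φ 0 := by simp [dvC, extFun_smul]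
    rw [Set.mem_setOf_eq] at *
    rw [this, hφ, smul_zero]

/-- The projection-like map `R φ = φ − Y·φ'(0)`. -/
def RKmap {r : ℝ} {n : ℕ} (ψ : Fin n → C1 r ℝ) (φ : C1 r (Fin n → ℝ)) : C1 r (Fin n → ℝ) :=
  φ - Ymap ψ (dvC φ 0)

section diffeos

variable {E : Type*} [NormedAddCommGroup E] [NormedSpace ℝ E]
variable {E' : Type*} [NormedAddCommGroup E'] [NormedSpace ℝ E']

/-- `f` defines a `C¹`-diffeomorphism from `s` onto `t`: `f` is continuously differentiable
on `s`, injective on `s`, maps `s` onto `t`, and has a continuously differentiable inverse. -/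
def IsC1DiffeoOn (f : E → E') (s : Set E) (t : Set E') : Prop :=
  ContDiffOn ℝ 1 f s ∧ Set.InjOn f s ∧ f '' s = t ∧
    ∃ g : E' → E, ContDiffOn ℝ 1 g t ∧ Set.InvOn g f s t

/-- The tangent cone of `X ⊆ E` at `x`: all velocities `c'(0)` of continuously differentiable
curves in `X` through `x`. -/
def tangentSet (X : Set E) (x : E) : Set E :=
  {v | ∃ (c : ℝ → E) (ε : ℝ), 0 < ε ∧ ContDiffOn ℝ 1 c (Set.Ioo (-ε) ε) ∧
      (∀ s ∈ Set.Ioo (-ε) ε, c s ∈ X) ∧ c 0 = x ∧ HasDerivWithinAt c v (Set.Ioo (-ε) ε) 0}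

/-- `X` is a continuously differentiable submanifold of codimension `m` of `E`. -/
def IsC1SubmanifoldCodim (X : Set E) (m : ℕ) : Prop :=
  ∀ x ∈ X, ∃ (O : Set E) (Φ : E → E) (H Q : Submodule ℝ E),
    IsOpen O ∧ x ∈ O ∧ IsClosed (H : Set E) ∧ IsCompl H Q ∧ Module.finrank ℝ Q = m ∧
    IsOpen (Φ '' O) ∧ IsC1DiffeoOn Φ O (Φ '' O) ∧ Φ '' (X ∩ O) = (H : Set E) ∩ (Φ '' O)

/-- `X` is a continuously differentiable submanifold of `E`. -/
def IsC1Submanifold (X : Set E) : Prop :=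
  ∀ x ∈ X, ∃ (O : Set E) (Φ : E → E) (H : Submodule ℝ E),
    IsOpen O ∧ x ∈ O ∧ IsClosed (H : Set E) ∧
    IsOpen (Φ '' O) ∧ IsC1DiffeoOn Φ O (Φ '' O) ∧ Φ '' (X ∩ O) = (H : Set E) ∩ (Φ '' O)

/-- `A` is an almost graph over `H`. -/
def IsAlmostGraphOver (A : Set E) (H : Set E) : Prop :=
  ∃ (dm : Set E) (α : E → E), dm ⊆ H ∧ ContDiffOn ℝ 1 α dm ∧
    (∀ ζ ∈ dm ∩ A, α ζ = 0) ∧ (∀ ζ ∈ dm \ A, α ζ ∉ H) ∧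
    IsC1DiffeoOn (fun ζ => ζ + α ζ) dm A

end diffeos

/-- The data of the delay differential system
`x'(t) = g(x(t-d_1(Lx_t)),…,x(t-d_kk(Lx_t)))`. -/
structure Setting (r : ℝ) (n kk : ℕ) (F : Type*) [NormedAddCommGroup F] [NormedSpace ℝ F] where
  /-- The continuous linear map `L : C([-r,0],ℝⁿ) → F`. -/
  L : C(Icc0 r, Fin n → ℝ) →L[ℝ] F
  /-- The open set `W ⊆ F`. -/
  W : Set F
  Wopen : IsOpen W
  /-- The delay functions `d_k : W → [0,r]`. -/
  d : Fin kk → F → ℝ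
  d_smooth : ∀ k, ContDiffOn ℝ 1 (d k) W
  d_mem : ∀ k, ∀ w ∈ W, d k w ∈ Set.Icc (0:ℝ) r
  /-- The open set `V ⊆ (ℝⁿ)^kk`. -/
  V : Set (Fin kk → Fin n → ℝ)
  Vopen : IsOpen V
  /-- The right hand side function `g : V → ℝⁿ`. -/
  g : (Fin kk → Fin n → ℝ) → Fin n → ℝ
  g_smooth : ContDiffOn ℝ 1 g V

namespace Setting

variable {r : ℝ} {n kk : ℕ} {F : Type*} [NormedAddCommGroup F] [NormedSpace ℝ F]
variable (S : Setting r n kk F)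

/-- `L` applied to (the `C⁰`-part of) `φ ∈ C¹`. -/
def Lof (φ : C1 r (Fin n → ℝ)) : F := S.L φ.1.1

/-- `φ̂ = (φ(-d_1(Lφ)),…,φ(-d_kk(Lφ)))`. -/
def hat (φ : C1 r (Fin n → ℝ)) : Fin kk → Fin n → ℝ := fun k => evC φ (-(S.d k (S.Lof φ)))

/-- The domain `U = {φ ∈ C¹ : Lφ ∈ W, φ̂ ∈ V}`. -/
def U : Set (C1 r (Fin n → ℝ)) := {φ | S.Lof φ ∈ S.W ∧ S.hat φ ∈ S.V}

/-- The right hand side `f(φ) = g(φ̂)`. -/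
def fmap (φ : C1 r (Fin n → ℝ)) : Fin n → ℝ := S.g (S.hat φ)

/-- The solution manifold `X_f = {φ ∈ U : φ'(0) = f(φ)}`. -/
def Xf : Set (C1 r (Fin n → ℝ)) := {φ | φ ∈ S.U ∧ dvC φ 0 = S.fmap φ}

/-- `W_J = {w ∈ W : d_j(w)=0 for j∈J, d_k(w)>0 for k∉J}`. -/
def WJ (J : Finset (Fin kk)) : Set F :=
  {w | w ∈ S.W ∧ (∀ j ∈ J, S.d j w = 0) ∧ ∀ k ∉ J, 0 < S.d k w}

/-- `W^J = {w ∈ W : d_k(w)>0 for k∉J}`. -/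
def WupJ (J : Finset (Fin kk)) : Set F :=
  {w | w ∈ S.W ∧ ∀ k ∉ J, 0 < S.d k w}

/-- `U_J = U ∩ L⁻¹(W_J)`. -/
def UJ (J : Finset (Fin kk)) : Set (C1 r (Fin n → ℝ)) := {φ | φ ∈ S.U ∧ S.Lof φ ∈ S.WJ J}

/-- `U^J = U ∩ L⁻¹(W^J)`. -/
def UupJ (J : Finset (Fin kk)) : Set (C1 r (Fin n → ℝ)) := {φ | φ ∈ S.U ∧ S.Lof φ ∈ S.WupJ J}

/-- `X_{fJ} = X_f ∩ U_J`. -/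
def XfJ (J : Finset (Fin kk)) : Set (C1 r (Fin n → ℝ)) := S.Xf ∩ S.UJ J

/-- Hypothesis (b): `g` is bounded. -/
def HypB : Prop := ∃ M, ∀ v ∈ S.V, ‖S.g v‖ ≤ M

/-- Hypothesis (d1b): `d₁ = 0` on `W` and `g` is bounded on subsets of `V` with bounded
first component. -/
def HypD1B (hk : 0 < kk) : Prop :=
  (∀ w ∈ S.W, S.d ⟨0, hk⟩ w = 0) ∧
  ∀ B : Set (Fin n → ℝ), Bornology.IsBounded B →
    Bornology.IsBounded (S.g '' {v | v ∈ S.V ∧ v ⟨0, hk⟩ ∈ B})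

/-- The partial derivative `∂_{(k-1)n+ν} g_μ (φ̂)`. -/
def dgCoeff (φ : C1 r (Fin n → ℝ)) (k : Fin kk) (ν : Fin n) (μ : Fin n) : ℝ :=
  fderivWithin ℝ S.g S.V (S.hat φ) (Pi.single k (Pi.single ν 1)) μ

/-- The right hand side of the formula for `Df_μ(φ)χ`. -/
def dFormula (φ χ : C1 r (Fin n → ℝ)) (μ : Fin n) : ℝ :=
  ∑ k, ∑ ν, S.dgCoeff φ k ν μ *
    (evC χ (-(S.d k (S.Lof φ))) ν -
      dvC φ (-(S.d k (S.Lof φ))) ν * fderivWithin ℝ (S.d k) S.W (S.Lof φ) (S.Lof χ))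

/-- The map `R^J(φ) = φ − Y_J(Lφ)·φ'(0)` of Section 4 of the paper. -/
def RJmap (y : Fin n → F → C1 r ℝ) (φ : C1 r (Fin n → ℝ)) : C1 r (Fin n → ℝ) :=
  φ - Ymap (fun ν => y ν (S.Lof φ)) (dvC φ 0)

end Setting

variable {r : ℝ} {n kk : ℕ} {F : Type*} [NormedAddCommGroup F] [NormedSpace ℝ F]
  [FiniteDimensional ℝ F]

/-! On a fibre `ζ + range Y` of the projection along `Q_K = range Y`, the value of `L` is constant,
so `φ̂` is affine: for `φ = ζ + Y x` it is `ζ̂ + B(ζ) x`. If `ζ ∈ X₀`, the equation `φ'(0) = f(φ)`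
becomes the fixed point equation `x = g (ζ̂ + B(ζ) x)`. On `U_K` all delays vanish, and `B(ζ) = 0`
because `ψ_ν(0) = 0`. For `B` close to `0` the implicit function theorem provides a `C¹` solution,
and `x ↦ g (a + B x)` contracts on bounded sets, so that there is at most one solution of a given
size. Each of (b), (d1b), (K) bounds all solutions a priori, locally uniformly in `ζ`. Hence the
solution on a fibre is globally unique, and the local solutions glue to a graph around all of
`X_{fK}`. -/

open Filter Topology

section Gluing

variable {𝕜 X E : Type*} [NontriviallyNormedField 𝕜] [NormedAddCommGroup X] [NormedSpace 𝕜 X]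
  [NormedAddCommGroup E] [NormedSpace 𝕜 E]

theorem exists_contDiffOn_graph_of_locally {m : WithTop ℕ∞} {p : X → E → Prop} {s : Set X}
    (hloc : ∀ a ∈ s, ∃ h : X → E, ∀ᶠ z in 𝓝 a, ContDiffAt 𝕜 m h z ∧ ∀ x, p z x ↔ x = h z) :
    ∃ (O : Set X) (h : X → E), IsOpen O ∧ s ⊆ O ∧ ContDiffOn 𝕜 m h O ∧
      ∀ z ∈ O, ∀ x, p z x ↔ x = h z := by
  let O : Set X :=
    {a | ∃ h : X → E, ∀ᶠ z in 𝓝 a, ContDiffAt 𝕜 m h z ∧ ∀ x, p z x ↔ x = h z}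
  have hO : IsOpen O := isOpen_iff_eventually.2 fun a ⟨h, hh⟩ =>
    hh.eventually_nhds.mono fun _ hz => ⟨h, hz⟩
  choose! H hH using fun a (ha : a ∈ O) => ha
  have hgraph : ∀ z ∈ O, ∀ x, p z x ↔ x = H z z := fun z hz => (hH z hz).self_of_nhds.2
  refine ⟨O, fun z => H z z, hO, hloc, fun a ha => ?_, hgraph⟩
  have heq : (fun z => H z z) =ᶠ[𝓝 a] H a := by
    filter_upwards [hH a ha, hO.mem_nhds ha] with z hz hzO
    exact (hz.2 _).1 ((hgraph z hzO _).2 rfl)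
  exact ((hH a ha).self_of_nhds.1.congr_of_eventuallyEq heq).contDiffWithinAt

end Gluing

section FixedPoint

variable {𝕜 A E : Type*} [RCLike 𝕜] [NormedAddCommGroup A] [NormedSpace 𝕜 A]
  [NormedAddCommGroup E] [NormedSpace 𝕜 E] {g : A → E} {a : A}

theorem exists_contDiffAt_fixedPoint_affine [CompleteSpace A] [CompleteSpace E]
    {m : WithTop ℕ∞} (hg : ContDiffAt 𝕜 m g a) (hm : m ≠ 0) (hm' : m ≠ ↑(⊤ : ℕ∞)) :
    ∃ h : A × (E →L[𝕜] A) → E, ∀ᶠ p in 𝓝 (a, (0 : E →L[𝕜] A)),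
      ContDiffAt 𝕜 m h p ∧ g (p.1 + p.2 (h p)) = h p := by
  let G : (A × (E →L[𝕜] A)) × E → E := fun q => q.2 - g (q.1.1 + q.1.2 q.2)
  let u : (A × (E →L[𝕜] A)) × E := ((a, 0), g a)
  have hG : ContDiffAt 𝕜 m G u := by
    have hinner : ContDiffAt 𝕜 m
        (fun q : (A × (E →L[𝕜] A)) × E => q.1.1 + q.1.2 q.2) u := by fun_prop
    exact contDiffAt_snd.sub (ContDiffAt.comp (g := g) u (by simpa [u] using hg) hinner)
  have hGu : G u = 0 := by simp [G, u]
  have hpartial : fderiv 𝕜 G u ∘L .inr 𝕜 (A × (E →L[𝕜] A)) E = .id 𝕜 E := by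
    have hchain := (hG.differentiableAt hm).hasFDerivAt.comp (g a)
      (hasFDerivAt_prodMk_right (𝕜 := 𝕜) (a, (0 : E →L[𝕜] A)) (g a))
    have hslice : (G ∘ fun x => ((a, (0 : E →L[𝕜] A)), x)) = fun x => x - g a := by
      ext x; simp [G]
    rw [hslice] at hchain
    exact hchain.unique ((hasFDerivAt_id _).sub_const _)
  have hinv : (fderiv 𝕜 G u ∘L .inr 𝕜 (A × (E →L[𝕜] A)) E).IsInvertible := by
    rw [hpartial]
    exact ⟨.refl 𝕜 E, rfl⟩
  refine ⟨hG.implicitFunction hm hinv, ?_⟩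
  filter_upwards [(hG.contDiffAt_implicitFunction hm hinv).eventually hm',
    hG.eventually_apply_implicitFunction hm hinv] with p hsmooth hzero
  exact ⟨hsmooth, (sub_eq_zero.1 (hzero.trans hGu)).symm⟩

theorem eventually_forall_norm_le_add_apply_mem {t : Set A} (ht : t ∈ 𝓝 a) (M : ℝ) :
    ∀ᶠ p in 𝓝 (a, (0 : E →L[𝕜] A)), ∀ x : E, ‖x‖ ≤ M → p.1 + p.2 x ∈ t := by
  obtain ⟨δ, hδ, hball⟩ := Metric.mem_nhds_iff.1 ht
  have hcont : Continuous fun p : A × (E →L[𝕜] A) => ‖p.1 - a‖ + ‖p.2‖ * M := by fun_prop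
  filter_upwards [hcont.continuousAt.eventually_lt continuousAt_const
    (show ‖a - a‖ + ‖(0 : E →L[𝕜] A)‖ * M < δ by simpa using hδ)] with p hp x hx
  refine hball (mem_ball_iff_norm.2 ?_)
  calc ‖p.1 + p.2 x - a‖ = ‖(p.1 - a) + p.2 x‖ := by rw [add_sub_right_comm]
    _ ≤ ‖p.1 - a‖ + ‖p.2‖ * ‖x‖ := norm_add_le_of_le le_rfl (p.2.le_opNorm x)
    _ ≤ ‖p.1 - a‖ + ‖p.2‖ * M := by gcongr
    _ < δ := hp

theorem eventually_fixedPoint_affine_unique (hg : ContDiffAt 𝕜 1 g a) (M : ℝ) :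
    ∀ᶠ p in 𝓝 (a, (0 : E →L[𝕜] A)), ∀ x y : E, ‖x‖ ≤ M → ‖y‖ ≤ M →
      g (p.1 + p.2 x) = x → g (p.1 + p.2 y) = y → x = y := by
  obtain ⟨K, t, ht, hK⟩ := hg.exists_lipschitzOnWith
  have hcont : Continuous fun p : A × (E →L[𝕜] A) => (K : ℝ) * ‖p.2‖ := by fun_prop
  filter_upwards [eventually_forall_norm_le_add_apply_mem ht M,
    hcont.continuousAt.eventually_lt continuousAt_const
      (show (K : ℝ) * ‖(0 : E →L[𝕜] A)‖ < 1 by simp)] with p hmem hcontr x y hx hy hgx hgy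
  have hle : ‖x - y‖ ≤ K * ‖p.2‖ * ‖x - y‖ := calc
    ‖x - y‖ = ‖g (p.1 + p.2 x) - g (p.1 + p.2 y)‖ := by rw [hgx, hgy]
    _ ≤ K * ‖p.1 + p.2 x - (p.1 + p.2 y)‖ := hK.norm_sub_le (hmem x hx) (hmem y hy)
    _ = K * ‖p.2 (x - y)‖ := by rw [add_sub_add_left_eq_sub, map_sub]
    _ ≤ K * (‖p.2‖ * ‖x - y‖) := by gcongr; exact p.2.le_opNorm _
    _ = K * ‖p.2‖ * ‖x - y‖ := (mul_assoc _ _ _).symm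
  have hzero : ‖x - y‖ = 0 := by nlinarith [norm_nonneg (x - y)]
  exact sub_eq_zero.1 (norm_eq_zero.1 hzero)

end FixedPoint

section Graph

variable {X E : Type*} [NormedAddCommGroup X] [NormedSpace ℝ X]
  [NormedAddCommGroup E] [NormedSpace ℝ E] {D : X →L[ℝ] E} {Y : E →L[ℝ] X}

/-- The map `φ ↦ φ - Y (D φ)`: when `Y` is a right inverse of `D`, this is the projection onto
the kernel of `D` along the range of `Y`. -/
def projAlong (D : X →L[ℝ] E) (Y : E →L[ℝ] X) : X →L[ℝ] X := .id ℝ X - Y ∘L D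

lemma projAlong_apply (φ : X) : projAlong D Y φ = φ - Y (D φ) := rfl

lemma projAlong_add_self (φ : X) : projAlong D Y φ + Y (D φ) = φ := sub_add_cancel _ _

lemma projAlong_mem_ker (hDY : ∀ x, D (Y x) = x) (φ : X) : projAlong D Y φ ∈ D.ker := by
  simp [projAlong_apply, hDY]

lemma projAlong_add_apply (hDY : ∀ x, D (Y x) = x) {ζ : X} (hζ : ζ ∈ D.ker) (x : E) :
    projAlong D Y (ζ + Y x) = ζ := by
  have hDζ : D ζ = 0 := hζ
  simp [projAlong_apply, hDY, hDζ]

variable {M O : Set X} {h : X → E}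

lemma bijOn_invOn_projAlong (hDY : ∀ x, D (Y x) = x)
    (hM : ∀ ζ ∈ (D.ker : Set X) ∩ O, ∀ x, ζ + Y x ∈ M ↔ x = h ζ) :
    BijOn (projAlong D Y) (M ∩ projAlong D Y ⁻¹' O) (D.ker ∩ O) ∧
      InvOn (fun ζ => ζ + Y (h ζ)) (projAlong D Y) (M ∩ projAlong D Y ⁻¹' O) (D.ker ∩ O) := by
  have hleft : LeftInvOn (fun ζ => ζ + Y (h ζ)) (projAlong D Y) (M ∩ projAlong D Y ⁻¹' O) := by
    rintro φ ⟨hφM, hφO⟩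
    have hDφ : D φ = h (projAlong D Y φ) :=
      (hM _ ⟨projAlong_mem_ker hDY φ, hφO⟩ _).1 (by rwa [projAlong_add_self])
    change projAlong D Y φ + Y (h (projAlong D Y φ)) = φ
    rw [← hDφ, projAlong_add_self]
  have hright : RightInvOn (fun ζ => ζ + Y (h ζ)) (projAlong D Y) (D.ker ∩ O) :=
    fun ζ hζ => projAlong_add_apply hDY hζ.1 _
  have hmaps : MapsTo (fun ζ => ζ + Y (h ζ)) (D.ker ∩ O) (M ∩ projAlong D Y ⁻¹' O) :=
    fun ζ hζ => ⟨(hM ζ hζ _).2 rfl, by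
      rw [mem_preimage, projAlong_add_apply hDY hζ.1]; exact hζ.2⟩
  exact ⟨InvOn.bijOn ⟨hleft, hright⟩ (fun φ hφ => ⟨projAlong_mem_ker hDY φ, hφ.2⟩) hmaps,
    hleft, hright⟩

theorem isC1DiffeoOn_projAlong (hDY : ∀ x, D (Y x) = x) (hh : ContDiffOn ℝ 1 h O)
    (hM : ∀ ζ ∈ (D.ker : Set X) ∩ O, ∀ x, ζ + Y x ∈ M ↔ x = h ζ) :
    IsC1DiffeoOn (projAlong D Y) (M ∩ projAlong D Y ⁻¹' O) (D.ker ∩ O) := by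
  obtain ⟨hbij, hinv⟩ := bijOn_invOn_projAlong hDY hM
  exact ⟨(projAlong D Y).contDiff.contDiffOn, hbij.injOn, hbij.image_eq,
    fun ζ => ζ + Y (h ζ),
    contDiffOn_id.add (Y.contDiff.comp_contDiffOn (hh.mono inter_subset_right)), hinv⟩

theorem inter_preimage_projAlong_eq_graph (hDY : ∀ x, D (Y x) = x)
    (hM : ∀ ζ ∈ (D.ker : Set X) ∩ O, ∀ x, ζ + Y x ∈ M ↔ x = h ζ) :
    M ∩ projAlong D Y ⁻¹' O = (fun ζ => ζ + Y (h ζ)) '' (D.ker ∩ O) := by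
  obtain ⟨hbij, hinv⟩ := bijOn_invOn_projAlong hDY hM
  rw [← hbij.image_eq, hinv.1.image_image]

end Graph

section OperatorFamily

variable {𝕜 T X E : Type*} [NontriviallyNormedField 𝕜] [NormedAddCommGroup T] [NormedSpace 𝕜 T]
  [NormedAddCommGroup X] [NormedSpace 𝕜 X] [NormedAddCommGroup E] [NormedSpace 𝕜 E]
  {e : T → X →L[𝕜] E} {s : Set T}

/- The error term `(e t' - e t) (x' - x)` is `o(‖x' - x‖)` as soon as `e` is continuous in operator
norm, so `e` itself need not be differentiable. -/
theorem hasFDerivWithinAt_clm_apply_of_continuousWithinAt {x : X} {t : T} {e' : T →L[𝕜] E}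
    (he : ContinuousWithinAt e s t) (he' : HasFDerivWithinAt (fun t => e t x) e' s t) :
    HasFDerivWithinAt (fun p : X × T => e p.2 p.1)
      (e t ∘L .fst 𝕜 X T + e' ∘L .snd 𝕜 X T) (univ ×ˢ s) (x, t) := by
  have hsnd : MapsTo Prod.snd ((univ : Set X) ×ˢ s) s := fun p hp => hp.2
  have htime : HasFDerivWithinAt (fun p : X × T => e p.2 x) (e' ∘L .snd 𝕜 X T)
      (univ ×ˢ s) (x, t) :=
    HasFDerivWithinAt.comp (g := fun t => e t x) (x, t) he' hasFDerivWithinAt_snd hsnd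
  have herror : (fun p : X × T => (e p.2 - e t) (p.1 - x))
      =o[𝓝[univ ×ˢ s] (x, t)] fun p => p - (x, t) := by
    have hsmall : Tendsto (fun p : X × T => e p.2 - e t) (𝓝[univ ×ˢ s] (x, t)) (𝓝 0) := by
      have hcomp : ContinuousWithinAt (fun p : X × T => e p.2) (univ ×ˢ s) (x, t) :=
        ContinuousWithinAt.comp (x := (x, t)) he continuousWithinAt_snd hsnd
      exact tendsto_sub_nhds_zero_iff.2 hcomp
    refine Asymptotics.isLittleO_iff.2 fun c hc => ?_
    filter_upwards [hsmall.norm.eventually_lt_const (by simpa using hc)] with p hp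
    exact ((e p.2 - e t).le_opNorm _).trans
      (mul_le_mul hp.le (norm_fst_le (p - (x, t))) (norm_nonneg _) hc.le)
  refine .of_isLittleO ((herror.add htime.isLittleO).congr_left fun p => ?_)
  simp only [sub_apply, add_apply, map_sub, ContinuousLinearMap.comp_apply,
    ContinuousLinearMap.coe_fst', ContinuousLinearMap.coe_snd']
  abel

theorem contDiffOn_clm_apply_of_continuousOn {e' : X → T → T →L[𝕜] E} (he : ContinuousOn e s)
    (he' : ∀ x, ∀ t ∈ s, HasFDerivWithinAt (fun t => e t x) (e' x t) s t)
    (hcont : ContinuousOn (fun p : X × T => e' p.1 p.2) (univ ×ˢ s)) :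
    ContDiffOn 𝕜 1 (fun p : X × T => e p.2 p.1) (univ ×ˢ s) := by
  have hderiv : ContinuousOn (fun p : X × T => e p.2 ∘L .fst 𝕜 X T + e' p.1 p.2 ∘L .snd 𝕜 X T)
      (univ ×ˢ s) :=
    ((he.comp continuousOn_snd fun p hp => hp.2).clm_comp continuousOn_const).add
      (hcont.clm_comp continuousOn_const)
  rw [← zero_add (1 : WithTop ℕ∞), contDiffOn_succ_iff_hasFDerivWithinAt (by simp)]
  intro p hp
  rw [insert_eq_of_mem hp]
  exact ⟨_, self_mem_nhdsWithin, by simp, _, fun q hq =>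
    hasFDerivWithinAt_clm_apply_of_continuousWithinAt (he q.2 hq.2) (he' q.1 q.2 hq.2),
    contDiffOn_zero.2 hderiv⟩

end OperatorFamily

section SolutionManifold

/- Found by `inferInstance` as well, but not while the norms on `C1 r E` are being unified: the
search for `CompactIccSpace ℝ` then fails to identify two order structures on `ℝ`. -/
local instance compactSpace_Icc0 (r : ℝ) : CompactSpace (Icc0 r) :=
  isCompact_iff_compactSpace.1 isCompact_Icc

section Evaluation

variable {E : Type*} [NormedAddCommGroup E]

lemma norm_extFun_le (φ : C(Icc0 r, E)) (t : ℝ) : ‖extFun φ t‖ ≤ ‖φ‖ := by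
  unfold extFun
  split_ifs with ht
  · exact φ.norm_coe_le_norm ⟨t, ht⟩
  · simp

lemma continuousOn_extFun :
    ContinuousOn (fun p : C(Icc0 r, E) × ℝ => extFun p.1 p.2) (univ ×ˢ Icc0 r) := by
  rintro ⟨φ, t⟩ ⟨-, ht⟩
  have hr : -r ≤ 0 := ht.1.trans ht.2
  have hproj : Continuous fun p : C(Icc0 r, E) × ℝ => p.1 (projIcc (-r) 0 hr p.2) := by fun_prop
  refine hproj.continuousWithinAt.congr_of_mem (fun p hp => ?_) ⟨mem_univ _, ht⟩
  have hp2 : p.2 ∈ Icc0 r := hp.2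
  simp only [extFun, dif_pos hp2, projIcc_of_mem hr hp2]

/-- Evaluation at `t` as a continuous linear functional on `C([-r,0],E)`; it vanishes for `t`
outside `[-r,0]`, in accordance with `extFun`. -/
def extFunCLM (r : ℝ) (E : Type*) [NormedAddCommGroup E] [NormedSpace ℝ E] (t : ℝ) :
    C(Icc0 r, E) →L[ℝ] E :=
  LinearMap.mkContinuous
    { toFun := fun φ => extFun φ t
      map_add' := fun φ χ => congrFun (extFun_add φ χ) t
      map_smul' := fun c φ => congrFun (extFun_smul c φ) t } 1
    fun φ => by simpa using norm_extFun_le φ t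

/-- The inclusion `φ ↦ φ` of `C¹([-r,0],E)` into `C([-r,0],E)`. -/
def toContCLM (r : ℝ) (E : Type*) [NormedAddCommGroup E] [NormedSpace ℝ E] :
    C1 r E →L[ℝ] C(Icc0 r, E) :=
  .fst ℝ _ _ ∘L (C1sub r E).subtypeL

/-- Differentiation `φ ↦ φ'` from `C¹([-r,0],E)` to `C([-r,0],E)`. -/
def derivCLM (r : ℝ) (E : Type*) [NormedAddCommGroup E] [NormedSpace ℝ E] :
    C1 r E →L[ℝ] C(Icc0 r, E) :=
  .snd ℝ _ _ ∘L (C1sub r E).subtypeL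

/-- Evaluation `φ ↦ φ(t)` as a continuous linear map on `C¹([-r,0],E)`. -/
def evCLM (r : ℝ) (E : Type*) [NormedAddCommGroup E] [NormedSpace ℝ E] (t : ℝ) :
    C1 r E →L[ℝ] E :=
  extFunCLM r E t ∘L toContCLM r E

/-- Evaluation `φ ↦ φ'(t)` of the derivative as a continuous linear map on `C¹([-r,0],E)`. -/
def dvCLM (r : ℝ) (E : Type*) [NormedAddCommGroup E] [NormedSpace ℝ E] (t : ℝ) :
    C1 r E →L[ℝ] E :=
  extFunCLM r E t ∘L derivCLM r E

variable [NormedSpace ℝ E]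

lemma evC_add (φ χ : C1 r E) (t : ℝ) : evC (φ + χ) t = evC φ t + evC χ t :=
  map_add (evCLM r E t) φ χ

lemma norm_dvC_le (φ : C1 r E) (t : ℝ) : ‖dvC φ t‖ ≤ ‖φ‖ :=
  (norm_extFun_le φ.1.2 t).trans (norm_snd_le φ.1)

lemma norm_evC_sub_evC_le (φ : C1 r E) {s t : ℝ} (hs : s ∈ Icc0 r) (ht : t ∈ Icc0 r) :
    ‖evC φ s - evC φ t‖ ≤ ‖φ‖ * ‖s - t‖ :=
  (convex_Icc (-r) 0).norm_image_sub_le_of_norm_hasDerivWithin_le φ.2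
    (fun x _ => norm_dvC_le φ x) ht hs

lemma continuousOn_dvC :
    ContinuousOn (fun p : C1 r E × ℝ => dvC p.1 p.2) (univ ×ˢ Icc0 r) :=
  continuousOn_extFun.comp
    (((derivCLM r E).continuous.comp continuous_fst).prodMk continuous_snd).continuousOn
    fun _ hp => ⟨mem_univ _, hp.2⟩

lemma lipschitzOnWith_evCLM : LipschitzOnWith 1 (evCLM r E) (Icc0 r) := by
  refine .of_dist_le_mul fun s hs t ht => ?_
  rw [dist_eq_norm, dist_eq_norm, NNReal.coe_one, one_mul]
  refine ContinuousLinearMap.opNorm_le_bound _ (norm_nonneg _) fun φ => ?_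
  rw [mul_comm]
  exact norm_evC_sub_evC_le φ hs ht

theorem contDiffOn_evC :
    ContDiffOn ℝ 1 (fun p : C1 r E × ℝ => evC p.1 p.2) (univ ×ˢ Icc0 r) :=
  contDiffOn_clm_apply_of_continuousOn (e := evCLM r E) lipschitzOnWith_evCLM.continuousOn
    (fun φ t ht => (φ.2 t ht).hasFDerivWithinAt)
    ((ContinuousLinearMap.toSpanSingletonCLE (𝕜 := ℝ)).continuous.comp_continuousOn
      continuousOn_dvC)

end Evaluation

section Ymap

lemma sCLM_apply (ν : Fin n) (a : ℝ) : sCLM n ν a = Pi.single ν a := by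
  ext j
  by_cases hj : j = ν <;> simp [sCLM, hj]

lemma evC_Ymap (ψ : Fin n → C1 r ℝ) (x : Fin n → ℝ) (t : ℝ) :
    evC (Ymap ψ x) t = fun ν => x ν * evC (ψ ν) t := by
  have hsingle (ν) : evCLM r _ t (singleC1 ν (ψ ν)) = Pi.single ν (evC (ψ ν) t) :=
    (extFun_CMsingle ν _ t).trans (sCLM_apply ν _)
  change evCLM r _ t (∑ ν, x ν • singleC1 ν (ψ ν)) = _
  ext j
  simp [hsingle, Pi.single_apply]

lemma dvC_Ymap (ψ : Fin n → C1 r ℝ) (x : Fin n → ℝ) (t : ℝ) :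
    dvC (Ymap ψ x) t = fun ν => x ν * dvC (ψ ν) t := by
  have hsingle (ν) : dvCLM r _ t (singleC1 ν (ψ ν)) = Pi.single ν (dvC (ψ ν) t) :=
    (extFun_CMsingle ν _ t).trans (sCLM_apply ν _)
  change dvCLM r _ t (∑ ν, x ν • singleC1 ν (ψ ν)) = _
  ext j
  simp [hsingle, Pi.single_apply]

end Ymap

namespace Setting

variable {G : Type*} [NormedAddCommGroup G] [NormedSpace ℝ G] (S : Setting r n kk G)

/-- The map `φ ↦ Lφ` as a continuous linear map on `C¹([-r,0],ℝⁿ)`. -/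
def LofCLM : C1 r (Fin n → ℝ) →L[ℝ] G := S.L ∘L toContCLM r (Fin n → ℝ)

lemma Lof_Ymap {ψ : Fin n → C1 r ℝ} (hψL : ∀ ν, S.L (singleC1 ν (ψ ν)).1.1 = 0)
    (x : Fin n → ℝ) : S.Lof (Ymap ψ x) = 0 := by
  change S.LofCLM (∑ ν, x ν • singleC1 ν (ψ ν)) = 0
  rw [map_sum]
  refine Finset.sum_eq_zero fun ν _ => ?_
  rw [map_smul, show S.LofCLM (singleC1 ν (ψ ν)) = 0 from hψL ν, smul_zero]

/-- Evaluation `χ ↦ (χ(-d_1(Lφ)),…,χ(-d_kk(Lφ)))` at the delays of a fixed `φ`. -/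
def hatCLM (φ : C1 r (Fin n → ℝ)) : C1 r (Fin n → ℝ) →L[ℝ] (Fin kk → Fin n → ℝ) :=
  .pi fun k => evCLM r _ (-(S.d k (S.Lof φ)))

lemma mapsTo_neg_delay (k : Fin kk) :
    MapsTo (fun φ => -(S.d k (S.Lof φ))) (S.Lof ⁻¹' S.W) (Icc0 r) := fun _ hφ =>
  ⟨neg_le_neg (S.d_mem k _ hφ).2, neg_nonpos.2 (S.d_mem k _ hφ).1⟩

lemma contDiffOn_neg_delay (k : Fin kk) :
    ContDiffOn ℝ 1 (fun φ => -(S.d k (S.Lof φ))) (S.Lof ⁻¹' S.W) :=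
  ((S.d_smooth k).comp (f := S.LofCLM) S.LofCLM.contDiff.contDiffOn fun _ hφ => hφ).neg

lemma isOpen_preimage_W : IsOpen (S.Lof ⁻¹' S.W) := S.Wopen.preimage S.LofCLM.continuous

lemma contDiffOn_evC_neg_delay {v : C1 r (Fin n → ℝ) → C1 r (Fin n → ℝ)}
    (hv : ContDiff ℝ 1 v) (k : Fin kk) :
    ContDiffOn ℝ 1 (fun φ => evC (v φ) (-(S.d k (S.Lof φ)))) (S.Lof ⁻¹' S.W) :=
  contDiffOn_evC.comp (hv.contDiffOn.prodMk (S.contDiffOn_neg_delay k))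
    fun _ hφ => ⟨mem_univ _, S.mapsTo_neg_delay k hφ⟩

lemma contDiffOn_hat : ContDiffOn ℝ 1 S.hat (S.Lof ⁻¹' S.W) :=
  contDiffOn_pi.2 fun k => S.contDiffOn_evC_neg_delay contDiff_id k

/- Evaluation at `t` depends only Lipschitz continuously on `t` in operator norm; after restriction
to a finite-dimensional space of `C¹` functions the dependence is `C¹`. -/
lemma contDiffOn_hatCLM_comp {E : Type*} [NormedAddCommGroup E] [NormedSpace ℝ E]
    [FiniteDimensional ℝ E] (Y : E →L[ℝ] C1 r (Fin n → ℝ)) :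
    ContDiffOn ℝ 1 (fun φ => S.hatCLM φ ∘L Y) (S.Lof ⁻¹' S.W) :=
  contDiffOn_clm_apply.2 fun x =>
    contDiffOn_pi.2 fun k => S.contDiffOn_evC_neg_delay (v := fun _ => Y x) contDiff_const k

lemma continuousAt_fmap {φ : C1 r (Fin n → ℝ)} (hφ : φ ∈ S.U) : ContinuousAt S.fmap φ :=
  ContinuousAt.comp (g := S.g) (S.g_smooth.continuousOn.continuousAt (S.Vopen.mem_nhds hφ.2))
    (S.contDiffOn_hat.continuousOn.continuousAt (S.isOpen_preimage_W.mem_nhds hφ.1))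

lemma delay_eq_zero_of_mem_UJ_univ {φ : C1 r (Fin n → ℝ)} (hφ : φ ∈ S.UJ Finset.univ)
    (k : Fin kk) : S.d k (S.Lof φ) = 0 :=
  hφ.2.2.1 k (Finset.mem_univ k)

variable {S} {Y : (Fin n → ℝ) →L[ℝ] C1 r (Fin n → ℝ)} {φ : C1 r (Fin n → ℝ)}

lemma Lof_add_apply (hYL : ∀ x, S.Lof (Y x) = 0) (ζ : C1 r (Fin n → ℝ)) (x : Fin n → ℝ) :
    S.Lof (ζ + Y x) = S.Lof ζ :=
  (map_add S.LofCLM ζ (Y x)).trans (add_eq_left.2 (hYL x))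

lemma hat_add_apply (hYL : ∀ x, S.Lof (Y x) = 0) (ζ : C1 r (Fin n → ℝ)) (x : Fin n → ℝ) :
    S.hat (ζ + Y x) = S.hat ζ + (S.hatCLM ζ ∘L Y) x := by
  funext k
  change evC (ζ + Y x) (-(S.d k (S.Lof (ζ + Y x)))) = _
  rw [Lof_add_apply hYL, evC_add]
  rfl

lemma hatCLM_comp_eq_zero (hY0 : ∀ x, evC (Y x) 0 = 0) (hd : ∀ k, S.d k (S.Lof φ) = 0) :
    S.hatCLM φ ∘L Y = 0 := by
  ext x k : 2
  change evC (Y x) (-(S.d k (S.Lof φ))) = 0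
  rw [hd, neg_zero, hY0]

lemma hat_add_apply_of_delay_eq_zero (hYL : ∀ x, S.Lof (Y x) = 0) (hY0 : ∀ x, evC (Y x) 0 = 0)
    (hd : ∀ k, S.d k (S.Lof φ) = 0) (x : Fin n → ℝ) : S.hat (φ + Y x) = S.hat φ := by
  rw [hat_add_apply hYL, hatCLM_comp_eq_zero hY0 hd, zero_apply, add_zero]

lemma add_apply_mem_UJ_univ (hYL : ∀ x, S.Lof (Y x) = 0) (hY0 : ∀ x, evC (Y x) 0 = 0)
    (hφ : φ ∈ S.UJ Finset.univ) (x : Fin n → ℝ) : φ + Y x ∈ S.UJ Finset.univ := by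
  have hhat := hat_add_apply_of_delay_eq_zero hYL hY0 (S.delay_eq_zero_of_mem_UJ_univ hφ) x
  refine ⟨⟨?_, ?_⟩, ?_⟩
  · rw [Lof_add_apply hYL]; exact hφ.1.1
  · rw [hhat]; exact hφ.1.2
  · rw [Lof_add_apply hYL]; exact hφ.2

variable (S) in
/-- The right hand side `f` is bounded on the fibres `ζ + range Y`, uniformly for `ζ` near `ζ₀`.
Each of the alternative hypotheses on `g` and on the delays serves to guarantee this. -/
def BoundedOnFibersNear (Y : (Fin n → ℝ) →L[ℝ] C1 r (Fin n → ℝ)) (ζ₀ : C1 r (Fin n → ℝ)) : Prop :=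
  ∃ M, ∀ᶠ ζ in 𝓝 ζ₀, ∀ x, ζ + Y x ∈ S.U → ‖S.fmap (ζ + Y x)‖ ≤ M

lemma HypB.boundedOnFibersNear (hS : S.HypB) (ζ₀ : C1 r (Fin n → ℝ)) :
    S.BoundedOnFibersNear Y ζ₀ :=
  hS.imp fun _ hM => .of_forall fun _ _ hx => hM _ hx.2

lemma HypD1B.boundedOnFibersNear {hk : 0 < kk} (hS : S.HypD1B hk)
    (hY0 : ∀ x, evC (Y x) 0 = 0) (ζ₀ : C1 r (Fin n → ℝ)) : S.BoundedOnFibersNear Y ζ₀ := by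
  obtain ⟨hd, hB⟩ := hS
  obtain ⟨M, hM⟩ := (hB (Metric.ball (evC ζ₀ 0) 1) Metric.isBounded_ball).exists_norm_le
  refine ⟨M, ?_⟩
  filter_upwards [(evCLM r (Fin n → ℝ) 0).continuous.continuousAt.eventually_mem
    (Metric.ball_mem_nhds _ one_pos)] with ζ hζ x hx
  have hhat : S.hat (ζ + Y x) ⟨0, hk⟩ = evC ζ 0 := by
    change evC (ζ + Y x) (-(S.d ⟨0, hk⟩ (S.Lof (ζ + Y x)))) = _
    rw [hd _ hx.1, neg_zero, evC_add, hY0, add_zero]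
  exact hM _ ⟨_, ⟨hx.2, by rw [hhat]; exact hζ⟩, rfl⟩

lemma boundedOnFibersNear_of_U_eq (hU : S.U = S.UJ Finset.univ) (hYL : ∀ x, S.Lof (Y x) = 0)
    (hY0 : ∀ x, evC (Y x) 0 = 0) (hφ : φ ∈ S.U) : S.BoundedOnFibersNear Y φ := by
  refine ⟨‖S.fmap φ‖ + 1, ?_⟩
  filter_upwards [(S.continuousAt_fmap hφ).norm.eventually_lt continuousAt_const
    (lt_add_one _)] with ζ hζ x hx
  have hd (k) : S.d k (S.Lof ζ) = 0 := by
    rw [← Lof_add_apply hYL ζ x]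
    exact S.delay_eq_zero_of_mem_UJ_univ (hU ▸ hx) k
  rw [fmap, hat_add_apply_of_delay_eq_zero hYL hY0 hd]
  exact hζ.le

theorem exists_contDiffAt_fiber_solution (hYL : ∀ x, S.Lof (Y x) = 0)
    (hY0 : ∀ x, evC (Y x) 0 = 0) (hφ : φ ∈ S.UJ Finset.univ) (hbdd : S.BoundedOnFibersNear Y φ) :
    ∃ h : C1 r (Fin n → ℝ) → (Fin n → ℝ), ∀ᶠ ζ in 𝓝 φ, ContDiffAt ℝ 1 h ζ ∧
      ∀ x, (ζ + Y x ∈ S.U ∧ S.fmap (ζ + Y x) = x) ↔ x = h ζ := by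
  obtain ⟨M, hM⟩ := hbdd
  have hVnhds : S.V ∈ 𝓝 (S.hat φ) := S.Vopen.mem_nhds hφ.1.2
  have hg : ContDiffAt ℝ 1 S.g (S.hat φ) := S.g_smooth.contDiffAt hVnhds
  obtain ⟨h, hh⟩ := exists_contDiffAt_fixedPoint_affine hg one_ne_zero (by simp)
  let p (ζ : C1 r (Fin n → ℝ)) := (S.hat ζ, S.hatCLM ζ ∘L Y)
  have hp {ζ} (hζ : S.Lof ζ ∈ S.W) : ContDiffAt ℝ 1 p ζ :=
    (S.contDiffOn_hat.prodMk (S.contDiffOn_hatCLM_comp Y)).contDiffAt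
      (S.isOpen_preimage_W.mem_nhds hζ)
  have hpφ : p φ = (S.hat φ, 0) :=
    Prod.ext rfl (hatCLM_comp_eq_zero hY0 (S.delay_eq_zero_of_mem_UJ_univ hφ))
  have hpcont : Tendsto p (𝓝 φ) (𝓝 (S.hat φ, 0)) := hpφ ▸ (hp hφ.1.1).continuousAt
  have hhcont : ContinuousAt h (S.hat φ, 0) := hh.self_of_nhds.1.continuousAt
  have hV : ∀ᶠ q in 𝓝 (S.hat φ, (0 : (Fin n → ℝ) →L[ℝ] _)), q.1 + q.2 (h q) ∈ S.V :=
    (continuousAt_fst.add (continuousAt_snd.clm_apply hhcont)).eventually_mem (by simpa)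
  refine ⟨h ∘ p, ?_⟩
  filter_upwards [hpcont.eventually hh, hpcont.eventually hV,
    hpcont.eventually (eventually_fixedPoint_affine_unique hg M), hM,
    S.isOpen_preimage_W.mem_nhds hφ.1.1] with ζ ⟨hsmooth, hfix⟩ hmem huniq hbound hζW
  have hhat (x) : S.hat (ζ + Y x) = (p ζ).1 + (p ζ).2 x := hat_add_apply hYL ζ x
  have hsol : ζ + Y (h (p ζ)) ∈ S.U ∧ S.fmap (ζ + Y (h (p ζ))) = h (p ζ) := by
    refine ⟨⟨?_, ?_⟩, ?_⟩
    · rw [Lof_add_apply hYL]; exact hζW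
    · rw [hhat]; exact hmem
    · rw [fmap, hhat]; exact hfix
  have hnorm {x} (hx : ζ + Y x ∈ S.U ∧ S.fmap (ζ + Y x) = x) : ‖x‖ ≤ M := hx.2 ▸ hbound x hx.1
  refine ⟨hsmooth.comp ζ (hp hζW), fun x => ⟨fun hx => ?_, fun hx => hx ▸ hsol⟩⟩
  exact huniq x _ (hnorm hx) (hnorm hsol) (by rw [← hhat]; exact hx.2) hfix

end Setting

theorem statement7_general {G : Type*} [NormedAddCommGroup G] [NormedSpace ℝ G] (hk : 0 < kk)
    (S : Setting r n kk G) (ψ : Fin n → C1 r ℝ)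
    (hψL : ∀ ν, S.L (singleC1 ν (ψ ν)).1.1 = 0)
    (hψ0 : ∀ ν, evC (ψ ν) 0 = 0)
    (hψ1 : ∀ ν, dvC (ψ ν) 0 = 1)
    (hyp : S.HypB ∨ S.HypD1B hk ∨ S.U = S.UJ (Finset.univ : Finset (Fin kk))) :
    ∃ N O : Set (C1 r (Fin n → ℝ)), IsOpen O ∧ N = S.Xf ∩ O ∧
      S.XfJ (Finset.univ : Finset (Fin kk)) ⊆ N ∧
      (∃ O', IsOpen O' ∧ RKmap ψ '' N = (X0sub r n : Set (C1 r (Fin n → ℝ))) ∩ O') ∧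
      IsC1DiffeoOn (RKmap ψ) N (RKmap ψ '' N) ∧
      ∃ (dm : Set (C1 r (Fin n → ℝ))) (γ : C1 r (Fin n → ℝ) → C1 r (Fin n → ℝ)),
        dm ⊆ (X0sub r n : Set (C1 r (Fin n → ℝ))) ∧ ContDiffOn ℝ 1 γ dm ∧
        (∀ ζ ∈ dm, γ ζ ∈ LinearMap.range (Ymap ψ)) ∧
        N = (fun ζ => ζ + γ ζ) '' dm := by
  let D := dvCLM r (Fin n → ℝ) 0
  let Y := (Ymap ψ).toContinuousLinearMap
  have hYL (x) : S.Lof (Y x) = 0 := S.Lof_Ymap hψL x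
  have hY0 (x) : evC (Y x) 0 = 0 := (evC_Ymap ψ x 0).trans (by ext; simp [hψ0])
  have hDY (x) : D (Y x) = x := (dvC_Ymap ψ x 0).trans (by simp [hψ1])
  have hbdd : ∀ φ ∈ S.UJ Finset.univ, S.BoundedOnFibersNear Y φ := fun φ hφ =>
    hyp.elim (·.boundedOnFibersNear φ) fun hyp' => hyp'.elim (·.boundedOnFibersNear hY0 φ)
      (Setting.boundedOnFibersNear_of_U_eq · hYL hY0 hφ.1)
  obtain ⟨O, h, hO, hUO, hh, hsol⟩ := exists_contDiffOn_graph_of_locally fun φ hφ =>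
    Setting.exists_contDiffAt_fiber_solution hYL hY0 hφ (hbdd φ hφ)
  have hM : ∀ ζ ∈ (D.ker : Set _) ∩ O, ∀ x, ζ + Y x ∈ S.Xf ↔ x = h ζ := fun ζ hζ x => by
    have hDζ : D ζ = 0 := hζ.1
    have hD : dvC (ζ + Y x) 0 = x := (map_add D ζ (Y x)).trans (by rw [hDY, hDζ, zero_add])
    rw [← hsol ζ hζ.2 x, Setting.Xf, mem_ofPred_eq, hD, eq_comm]
  have hR : RKmap ψ = ⇑(projAlong D Y) := rfl
  have hX0 : (X0sub r n : Set (C1 r (Fin n → ℝ))) = D.ker := rfl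
  have hdiffeo := isC1DiffeoOn_projAlong hDY hh hM
  have himage := hdiffeo.2.2.1
  rw [hR, hX0]
  refine ⟨S.Xf ∩ projAlong D Y ⁻¹' O, projAlong D Y ⁻¹' O,
    hO.preimage (projAlong D Y).continuous, rfl, fun φ hφ => ⟨hφ.1, hUO ?_⟩, ⟨O, hO, himage⟩,
    himage.symm ▸ hdiffeo, (D.ker : Set _) ∩ O, fun ζ => Y (h ζ), inter_subset_left,
    Y.contDiff.comp_contDiffOn (hh.mono inter_subset_right), fun ζ _ => ⟨h ζ, rfl⟩,
    inter_preimage_projAlong_eq_graph hDY hM⟩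
  rw [projAlong_apply, sub_eq_add_neg, ← map_neg]
  exact Setting.add_apply_mem_UJ_univ hYL hY0 hφ.2 _

end SolutionManifold

/-- Theorem 3.5 (i): there is an open neighbourhood `N_K` of `X_{fK}` in `X_f` on which `R^K`
restricts to a diffeomorphism onto an open subset of `X₀`, and `N_K` is a graph over `X₀`
with respect to the complement `Q_K`. -/
theorem statement7 (hr : 0 < r) (hk : 0 < kk) (S : Setting r n kk F)
    (hUK : (S.UJ (Finset.univ : Finset (Fin kk))).Nonempty)
    (z : ℝ) (hz : z ∈ Set.Ioo (-r) 0) (ψ : Fin n → C1 r ℝ)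
    (hψL : ∀ ν, S.L (singleC1 ν (ψ ν)).1.1 = 0)
    (hψ0 : ∀ ν, evC (ψ ν) 0 = 0)
    (hψ1 : ∀ ν, dvC (ψ ν) 0 = 1)
    (hψz : ∀ ν, ∀ t ∈ Set.Icc (-r) z, evC (ψ ν) t = 0)
    (hyp : S.HypB ∨ S.HypD1B hk ∨ S.U = S.UJ (Finset.univ : Finset (Fin kk))) :
    ∃ N O : Set (C1 r (Fin n → ℝ)), IsOpen O ∧ N = S.Xf ∩ O ∧
      S.XfJ (Finset.univ : Finset (Fin kk)) ⊆ N ∧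
      (∃ O', IsOpen O' ∧ RKmap ψ '' N = (X0sub r n : Set (C1 r (Fin n → ℝ))) ∩ O') ∧
      IsC1DiffeoOn (RKmap ψ) N (RKmap ψ '' N) ∧
      ∃ (dm : Set (C1 r (Fin n → ℝ))) (γ : C1 r (Fin n → ℝ) → C1 r (Fin n → ℝ)),
        dm ⊆ (X0sub r n : Set (C1 r (Fin n → ℝ))) ∧ ContDiffOn ℝ 1 γ dm ∧
        (∀ ζ ∈ dm, γ ζ ∈ LinearMap.range (Ymap ψ)) ∧
        N = (fun ζ => ζ + γ ζ) '' dm := by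
  exact statement7_general hk S ψ hψL hψ0 hψ1 hyp
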